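/- arXiv:2505.18357 — 4 statements merged into one kernel-verified Lean document; each statement's English description precedes it below -/
import Mathlib

section
/- Let ι be a finite index set with value function v : ι → ℝ (v i > 0 for all i) and cost function c : ι → ℝ (c i > 0 for all i), and let W ∈ ℝ be a work requirement. Suppose x* : ι → ℝ is a fractional schedule (0 ≤ x* i ≤ 1 for all i) with ∑ i, x* i * v i = W, and suppose there exists a threshold θ ≥ 0 such that for every i, if v i / c i > θ then x* i = 1, and if v i / c i < θ then x* i = 0. Then x* is optimal: for every fractional schedule x (0 ≤ x i ≤ 1) with ∑ i, x i * v i ≥ W, one has ∑ i, x* i * c i ≤ ∑ i, x i * c i. -/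
/-!
The threshold `θ` is a Lagrange multiplier: a threshold schedule maximizes the reduced value
`∑ i, x i * (v i - θ * c i)` term by term over all fractional schedules. If `0 < θ`, a schedule with
at least as much value as this maximizer must therefore have at least as much cost. If `θ = 0`, the
reduced value is the value itself, and its maximizer is unique as soon as no `v i` vanishes.
-/

/-- `y` is a threshold schedule for values `v`, costs `c` and threshold `θ`: options of efficiency
above `θ` are fully used, those below `θ` are not used. Efficiencies are compared in the
division-free form `θ * c i < v i`, which is meaningful for costs of any sign. -/
structure IsThresholdSchedule {ι R : Type*} [Mul R] [Zero R] [One R] [LT R]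
    (v c : ι → R) (θ : R) (y : ι → R) : Prop where
  eq_one : ∀ i, θ * c i < v i → y i = 1
  eq_zero : ∀ i, v i < θ * c i → y i = 0

namespace IsThresholdSchedule

theorem of_div {ι K : Type*} [Field K] [LinearOrder K] [IsStrictOrderedRing K]
    {v c y : ι → K} {θ : K} (hc : ∀ i, 0 < c i)
    (hone : ∀ i, θ < v i / c i → y i = 1) (hzero : ∀ i, v i / c i < θ → y i = 0) :
    IsThresholdSchedule v c θ y where
  eq_one i hi := hone i ((lt_div_iff₀ (hc i)).2 hi)
  eq_zero i hi := hzero i ((div_lt_iff₀ (hc i)).2 hi)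

section Ring

variable {ι R : Type*} [CommRing R] [LinearOrder R] [IsStrictOrderedRing R]
  {v c x y : ι → R} {θ : R}

theorem mul_sub_le_mul_sub (hy : IsThresholdSchedule v c θ y) (i : ι) {t : R}
    (ht0 : 0 ≤ t) (ht1 : t ≤ 1) :
    t * (v i - θ * c i) ≤ y i * (v i - θ * c i) := by
  rcases lt_trichotomy (θ * c i) (v i) with hlt | heq | hgt
  · rw [hy.eq_one i hlt]
    exact mul_le_mul_of_nonneg_right ht1 (sub_nonneg.2 hlt.le)
  · simp [heq]
  · rw [hy.eq_zero i hgt, zero_mul]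
    exact mul_nonpos_of_nonneg_of_nonpos ht0 (sub_nonpos.2 hgt.le)

variable [Fintype ι]

theorem sum_mul_sub_le_sum_mul_sub (hy : IsThresholdSchedule v c θ y)
    (hx0 : ∀ i, 0 ≤ x i) (hx1 : ∀ i, x i ≤ 1) :
    ∑ i, x i * (v i - θ * c i) ≤ ∑ i, y i * (v i - θ * c i) :=
  Finset.sum_le_sum fun i _ => hy.mul_sub_le_mul_sub i (hx0 i) (hx1 i)

theorem eq_of_sum_mul_sub_le (hy : IsThresholdSchedule v c θ y)
    (hx0 : ∀ i, 0 ≤ x i) (hx1 : ∀ i, x i ≤ 1) (hne : ∀ i, v i ≠ θ * c i)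
    (hle : ∑ i, y i * (v i - θ * c i) ≤ ∑ i, x i * (v i - θ * c i)) :
    x = y := by
  have hsum := (hy.sum_mul_sub_le_sum_mul_sub hx0 hx1).antisymm hle
  have hterm := (Finset.sum_eq_sum_iff_of_le fun i _ =>
    hy.mul_sub_le_mul_sub i (hx0 i) (hx1 i)).1 hsum
  funext i
  exact mul_right_cancel₀ (sub_ne_zero.2 (hne i)) (hterm i (Finset.mem_univ i))

theorem sum_mul_cost_le_of_pos (hy : IsThresholdSchedule v c θ y) (hθ : 0 < θ)
    (hx0 : ∀ i, 0 ≤ x i) (hx1 : ∀ i, x i ≤ 1)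
    (hval : ∑ i, y i * v i ≤ ∑ i, x i * v i) :
    ∑ i, y i * c i ≤ ∑ i, x i * c i := by
  have hreduced (z : ι → R) :
      ∑ i, z i * (v i - θ * c i) = ∑ i, z i * v i - θ * ∑ i, z i * c i := by
    simp only [mul_sub, mul_left_comm _ θ, Finset.sum_sub_distrib, Finset.mul_sum]
  have hmax := hy.sum_mul_sub_le_sum_mul_sub hx0 hx1
  rw [hreduced, hreduced] at hmax
  exact le_of_mul_le_mul_left (by linarith) hθ

end Ring

end IsThresholdSchedule

theorem threshold_schedule_optimal_general {ι R : Type*} [Fintype ι]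
    [CommRing R] [LinearOrder R] [IsStrictOrderedRing R] {v c x y : ι → R} {θ : R}
    (hy : IsThresholdSchedule v c θ y) (hθ : 0 ≤ θ) (hv : θ = 0 → ∀ i, v i ≠ 0)
    (hx0 : ∀ i, 0 ≤ x i) (hx1 : ∀ i, x i ≤ 1)
    (hval : ∑ i, y i * v i ≤ ∑ i, x i * v i) :
    ∑ i, y i * c i ≤ ∑ i, x i * c i := by
  rcases hθ.eq_or_lt with rfl | hpos
  · have hxy : x = y :=
      hy.eq_of_sum_mul_sub_le hx0 hx1 (by simpa using hv rfl) (by simpa using hval)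
    rw [hxy]
  · exact hy.sum_mul_cost_le_of_pos hpos hx0 hx1 hval

/-- Optimality of threshold (greedy) fractional schedules: any fractional
schedule meeting the work requirement exactly and having the threshold
structure minimizes cost among all feasible fractional schedules. -/
theorem threshold_schedule_optimal {ι : Type*} [Fintype ι]
    (v c : ι → ℝ) (hv : ∀ i, 0 < v i) (hc : ∀ i, 0 < c i) (W : ℝ)
    (xstar : ι → ℝ) (hx0 : ∀ i, 0 ≤ xstar i) (hx1 : ∀ i, xstar i ≤ 1)
    (hW : ∑ i, xstar i * v i = W)
    (θ : ℝ) (hθ : 0 ≤ θ)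
    (hhi : ∀ i, θ < v i / c i → xstar i = 1)
    (hlo : ∀ i, v i / c i < θ → xstar i = 0) :
    ∀ x : ι → ℝ, (∀ i, 0 ≤ x i) → (∀ i, x i ≤ 1) →
      W ≤ ∑ i, x i * v i → ∑ i, xstar i * c i ≤ ∑ i, x i * c i :=
  fun _ h0 h1 hfeasible => threshold_schedule_optimal_general (.of_div hc hhi hlo) hθ
    (fun _ i => (hv i).ne') h0 h1 (hW.trans_le hfeasible)
end

section
/- Fractional form of Theorem 1 for a single elastic job: let there be T time slots with carbon intensities CI : Fin T → ℝ, CI t > 0 for all t, and K scale increments with an antitone marginal throughput profile p : Fin K → ℝ, p k > 0 for all k, and let W satisfy 0 ≤ W ≤ ∑ (t : Fin T), ∑ (k : Fin K), p k. Consider fractional schedules x : Fin T × Fin K → ℝ with 0 ≤ x (t,k) ≤ 1, feasibility ∑ (t,k), x (t,k) * p k ≥ W, and emissions ∑ (t,k), x (t,k) * CI t. Then there exists a feasible schedule x* that minimizes emissions among all feasible schedules and is a threshold schedule: for some θ ≥ 0, x* (t,k) = 1 whenever p k / CI t > θ and x* (t,k) = 0 whenever p k / CI t < θ. -/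
/-!
Charge `θ > 0` units of work for each unit of emissions. A schedule that uses fully every option
with `v i - θ * c i > 0` and no option with `v i - θ * c i < 0` maximizes
`∑ i, x i * (v i - θ * c i)` over all fractional schedules, so no schedule doing at least as much
work can emit less. To meet a demand `W > 0` exactly, lower the threshold on the ratio `v i / c i`
until the options at or above it cover `W`; the options above it fall short, so a common fraction
of those lying exactly at the threshold makes up the difference.
-/

open Finset

section Selection

variable {ι α M : Type*} [Fintype ι] [LinearOrder α]

theorem exists_sum_filter_lt_lt_and_le_sum_filter_le [AddCommMonoid M] [LinearOrder M]
    (r : ι → α) (v : ι → M) {W : M} (hW₀ : 0 < W) (hW : W ≤ ∑ i, v i) :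
    ∃ j, ∑ i with r j < r i, v i < W ∧ W ≤ ∑ i with r j ≤ r i, v i := by
  have : Nonempty ι := by
    by_contra hι
    rw [not_nonempty_iff] at hι
    simp [hW₀.not_ge] at hW
  obtain ⟨m, hm⟩ := Finite.exists_min r
  obtain ⟨j, hj, hmax⟩ := exists_max_image {j | W ≤ ∑ i with r j ≤ r i, v i} r
    ⟨m, by simpa [hm] using hW⟩
  simp only [mem_filter_univ] at hj hmax
  refine ⟨j, ?_, hj⟩
  rcases (univ.filter fun i => r j < r i).eq_empty_or_nonempty with hempty | hnonempty
  · rwa [hempty, sum_empty]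
  · obtain ⟨k, hk, hmin⟩ := exists_min_image _ r hnonempty
    simp only [mem_filter_univ] at hk hmin
    have hnext : ∀ i, r j < r i ↔ r k ≤ r i := fun i => ⟨hmin i, hk.trans_le⟩
    simp only [hnext]
    exact lt_of_not_ge fun hcover => (hmax k hcover).not_gt hk

theorem exists_eq_and_pos_of_sum_filter_lt_lt [AddCommMonoid M] [LinearOrder M]
    [IsOrderedAddMonoid M] {r : ι → α} {v : ι → M} {θ : α}
    (h : ∑ i with θ < r i, v i < ∑ i with θ ≤ r i, v i) : ∃ i, r i = θ ∧ 0 < v i := by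
  rw [sum_filter, sum_filter] at h
  obtain ⟨i, -, hi⟩ := exists_lt_of_sum_lt h
  rcases lt_trichotomy θ (r i) with hlt | heq | hgt
  · simp [hlt, hlt.le] at hi
  · exact ⟨i, heq.symm, by simpa [heq] using hi⟩
  · simp [hgt.not_ge, hgt.not_gt] at hi

end Selection

section ThresholdSchedule

variable {ι α 𝕜 : Type*} [LinearOrder α]

/-- The greedy fractional schedule for the scores `r`: options scoring above `θ` are used fully,
those scoring below `θ` not at all, and all those scoring exactly `θ` share the same fraction
`l`. -/
def thresholdSchedule [Zero 𝕜] [One 𝕜] (r : ι → α) (θ : α) (l : 𝕜) (i : ι) : 𝕜 :=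
  if θ < r i then 1 else if θ ≤ r i then l else 0

theorem thresholdSchedule_of_lt [Zero 𝕜] [One 𝕜] {r : ι → α} {θ : α} (l : 𝕜) {i : ι}
    (h : θ < r i) : thresholdSchedule r θ l i = 1 :=
  if_pos h

theorem thresholdSchedule_of_gt [Zero 𝕜] [One 𝕜] {r : ι → α} {θ : α} (l : 𝕜) {i : ι}
    (h : r i < θ) : thresholdSchedule r θ l i = 0 := by
  simp [thresholdSchedule, h.not_gt, h.not_ge]

theorem thresholdSchedule_mem_Icc [Zero 𝕜] [One 𝕜] [Preorder 𝕜] [ZeroLEOneClass 𝕜]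
    (r : ι → α) (θ : α) {l : 𝕜} (hl : l ∈ Set.Icc 0 1) (i : ι) :
    thresholdSchedule r θ l i ∈ Set.Icc 0 1 := by
  unfold thresholdSchedule
  split_ifs
  · exact Set.right_mem_Icc.2 zero_le_one
  · exact hl
  · exact Set.left_mem_Icc.2 zero_le_one

theorem sum_thresholdSchedule_mul [Fintype ι] [CommRing 𝕜] (r : ι → α) (θ : α) (l : 𝕜)
    (v : ι → 𝕜) :
    ∑ i, thresholdSchedule r θ l i * v i =
      AffineMap.lineMap (∑ i with θ < r i, v i) (∑ i with θ ≤ r i, v i) l := by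
  rw [AffineMap.lineMap_apply_ring', sum_filter, sum_filter, ← sum_sub_distrib, mul_sum,
    ← sum_add_distrib]
  refine sum_congr rfl fun i _ => ?_
  rcases lt_trichotomy θ (r i) with hlt | heq | hgt
  · simp [thresholdSchedule, hlt, hlt.le]
  · simp [thresholdSchedule, heq]
  · simp [thresholdSchedule, hgt.not_gt, hgt.not_ge]

theorem exists_sum_thresholdSchedule_mul_eq [Fintype ι] [Field 𝕜] [LinearOrder 𝕜]
    [IsStrictOrderedRing 𝕜] (r : ι → α) (v : ι → 𝕜) {W : 𝕜} (hW₀ : 0 < W) (hW : W ≤ ∑ i, v i) :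
    ∃ j, 0 < v j ∧ ∃ l ∈ Set.Icc (0 : 𝕜) 1, ∑ i, thresholdSchedule r (r j) l i * v i = W := by
  obtain ⟨j, habove, hcover⟩ := exists_sum_filter_lt_lt_and_le_sum_filter_le r v hW₀ hW
  obtain ⟨k, hkj, hk⟩ := exists_eq_and_pos_of_sum_filter_lt_lt (habove.trans_le hcover)
  obtain ⟨l, hl, hlW⟩ : W ∈ AffineMap.lineMap (∑ i with r j < r i, v i)
      (∑ i with r j ≤ r i, v i) '' Set.Icc (0 : 𝕜) 1 := by
    rw [← segment_eq_image_lineMap, segment_eq_Icc (habove.le.trans hcover)]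
    exact ⟨habove.le, hcover⟩
  exact ⟨k, hk, l, hl, by rw [hkj, sum_thresholdSchedule_mul, hlW]⟩

end ThresholdSchedule

section Optimality

variable {ι R : Type*}

theorem mul_le_mul_of_pos_imp_eq_one_of_neg_imp_eq_zero [Semiring R] [LinearOrder R]
    [IsOrderedRing R] {a x y : R} (hx₀ : 0 ≤ x) (hx₁ : x ≤ 1) (hpos : 0 < a → y = 1)
    (hneg : a < 0 → y = 0) : x * a ≤ y * a := by
  rcases lt_trichotomy a 0 with ha | rfl | ha
  · simpa [hneg ha] using mul_nonpos_of_nonneg_of_nonpos hx₀ ha.le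
  · simp
  · simpa [hpos ha] using mul_le_mul_of_nonneg_right hx₁ ha.le

theorem sum_mul_le_sum_mul_of_threshold [Fintype ι] [CommRing R] [LinearOrder R]
    [IsStrictOrderedRing R] {c v x y : ι → R} {θ : R} (hθ : 0 < θ)
    (hfull : ∀ i, θ * c i < v i → y i = 1) (hnone : ∀ i, v i < θ * c i → y i = 0)
    (hx₀ : ∀ i, 0 ≤ x i) (hx₁ : ∀ i, x i ≤ 1) (hyx : ∑ i, y i * v i ≤ ∑ i, x i * v i) :
    ∑ i, y i * c i ≤ ∑ i, x i * c i := by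
  have hpriced (z : ι → R) :
      ∑ i, z i * (v i - θ * c i) = ∑ i, z i * v i - θ * ∑ i, z i * c i := by
    simp only [mul_sub, sum_sub_distrib, mul_sum, mul_left_comm]
  have hmax : ∑ i, x i * (v i - θ * c i) ≤ ∑ i, y i * (v i - θ * c i) :=
    sum_le_sum fun i _ => mul_le_mul_of_pos_imp_eq_one_of_neg_imp_eq_zero (hx₀ i) (hx₁ i)
      (fun h => hfull i (sub_pos.1 h)) (fun h => hnone i (sub_neg.1 h))
  rw [hpriced, hpriced] at hmax
  exact le_of_mul_le_mul_left (by linarith) hθ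

end Optimality

theorem single_job_threshold_optimal_general {ι 𝕜 : Type*} [Fintype ι] [Field 𝕜] [LinearOrder 𝕜]
    [IsStrictOrderedRing 𝕜] (c v : ι → 𝕜) (hc : ∀ i, 0 < c i) {W : 𝕜} (hW : W ≤ ∑ i, v i) :
    ∃ y : ι → 𝕜,
      (∀ i, 0 ≤ y i) ∧ (∀ i, y i ≤ 1) ∧ W ≤ ∑ i, y i * v i ∧
      (∀ x : ι → 𝕜, (∀ i, 0 ≤ x i) → (∀ i, x i ≤ 1) → W ≤ ∑ i, x i * v i →
        ∑ i, y i * c i ≤ ∑ i, x i * c i) ∧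
      ∃ θ : 𝕜, 0 ≤ θ ∧ (∀ i, θ < v i / c i → y i = 1) ∧ (∀ i, v i / c i < θ → y i = 0) := by
  rcases le_or_gt W 0 with hW₀ | hW₀
  · obtain ⟨M, hM⟩ := (Set.finite_range fun i => v i / c i).bddAbove
    have hratio (i : ι) : v i / c i ≤ max M 0 := le_max_of_le_left (hM ⟨i, rfl⟩)
    refine ⟨0, fun _ => le_rfl, fun _ => zero_le_one, by simpa using hW₀, fun x hx₀ _ _ => ?_,
      max M 0, le_max_right M 0, fun i hi => absurd hi (hratio i).not_gt, fun _ _ => rfl⟩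
    simpa using sum_nonneg fun i _ => mul_nonneg (hx₀ i) (hc i).le
  · obtain ⟨j, hj, l, hl, hyW⟩ := exists_sum_thresholdSchedule_mul_eq (fun i => v i / c i) v hW₀ hW
    have hθ : 0 < v j / c j := div_pos hj (hc j)
    have hmem := thresholdSchedule_mem_Icc (fun i => v i / c i) (v j / c j) hl
    refine ⟨_, fun i => (hmem i).1, fun i => (hmem i).2, hyW.ge, fun x hx₀ hx₁ hxW => ?_,
      v j / c j, hθ.le, fun i => thresholdSchedule_of_lt l, fun i => thresholdSchedule_of_gt l⟩
    exact sum_mul_le_sum_mul_of_threshold hθ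
      (fun i hi => thresholdSchedule_of_lt l ((lt_div_iff₀ (hc i)).2 hi))
      (fun i hi => thresholdSchedule_of_gt l ((div_lt_iff₀ (hc i)).2 hi))
      hx₀ hx₁ (hyW.trans_le hxW)

/-- Fractional form of Theorem 1 for a single elastic job: there exists a
feasible fractional schedule minimizing emissions that is a threshold schedule
with respect to the efficiency ratio `p k / CI t`. -/
theorem single_job_threshold_optimal (T K : ℕ)
    (CI : Fin T → ℝ) (hCI : ∀ t, 0 < CI t)
    (p : Fin K → ℝ) (hp : ∀ k, 0 < p k) (hanti : Antitone p)
    (W : ℝ) (hW0 : 0 ≤ W) (hW1 : W ≤ ∑ t : Fin T, ∑ k : Fin K, p k) :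
    ∃ xstar : Fin T × Fin K → ℝ,
      (∀ tk, 0 ≤ xstar tk) ∧ (∀ tk, xstar tk ≤ 1) ∧
      (W ≤ ∑ tk : Fin T × Fin K, xstar tk * p tk.2) ∧
      (∀ x : Fin T × Fin K → ℝ, (∀ tk, 0 ≤ x tk) → (∀ tk, x tk ≤ 1) →
        W ≤ ∑ tk : Fin T × Fin K, x tk * p tk.2 →
        ∑ tk : Fin T × Fin K, xstar tk * CI tk.1 ≤
          ∑ tk : Fin T × Fin K, x tk * CI tk.1) ∧
      (∃ θ : ℝ, 0 ≤ θ ∧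
        (∀ tk : Fin T × Fin K, θ < p tk.2 / CI tk.1 → xstar tk = 1) ∧
        (∀ tk : Fin T × Fin K, p tk.2 / CI tk.1 < θ → xstar tk = 0)) := by
  exact single_job_threshold_optimal_general (fun tk : Fin T × Fin K => CI tk.1) (fun tk => p tk.2)
    (fun tk => hCI tk.1) (by rwa [Fintype.sum_prod_type])
end

section
/- Optimality of threshold allocations under a capacity constraint (single slot, multiple jobs): let J be a finite set of jobs, each with an antitone nonnegative marginal throughput profile p j : ℕ → ℝ, and define T j n = ∑ i ∈ Finset.range n, p j i. Let M be a natural number and suppose a : J → ℕ satisfies ∑ j, a j = M together with the threshold property: for all jobs j and j', if a j ≥ 1 then p j (a j - 1) ≥ p j' (a j'). Then for every allocation b : J → ℕ with ∑ j, b j ≤ M, we have ∑ j, T j (b j) ≤ ∑ j, T j (a j). -/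
/-!
Regard an allocation as the set of the pairs `(j, i)` with `i < a j`, one for each server of each
job. By the threshold property every pair used by `b` but not by `a` has marginal throughput at most
that of every pair used by `a` but not by `b`. By capacity there are no more pairs of the first kind
than of the second, so they can be exchanged injectively for pairs of the second kind without loss.
-/

open Finset

section Exchange

variable {ι κ N : Type*} [AddCommMonoid N] [Preorder N] [IsOrderedAddMonoid N]

theorem sum_le_sum_of_card_le_of_forall_le {s : Finset ι} {t : Finset κ} {f : ι → N} {g : κ → N}
    (hcard : #s ≤ #t) (hle : ∀ x ∈ s, ∀ y ∈ t, f x ≤ g y) (hnonneg : ∀ y ∈ t, 0 ≤ g y) :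
    ∑ x ∈ s, f x ≤ ∑ y ∈ t, g y := by
  obtain ⟨u, hut, hu⟩ := exists_subset_card_eq hcard
  let e : s ≃ u := equivOfCardEq hu.symm
  calc ∑ x ∈ s, f x = ∑ x : s, f x := (sum_coe_sort s f).symm
    _ ≤ ∑ x : s, g (e x) := sum_le_sum fun x _ ↦ hle x x.2 (e x) (hut (e x).2)
    _ = ∑ y : u, g y := e.sum_comp fun y ↦ g y
    _ = ∑ y ∈ u, g y := sum_coe_sort u g
    _ ≤ ∑ y ∈ t, g y := sum_le_sum_of_subset_of_nonneg hut fun y hy _ ↦ hnonneg y hy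

theorem sum_le_sum_of_card_le_of_forall_sdiff_le [DecidableEq ι] {s t : Finset ι} {f : ι → N}
    (hcard : #s ≤ #t) (hle : ∀ x ∈ s \ t, ∀ y ∈ t \ s, f x ≤ f y)
    (hnonneg : ∀ y ∈ t \ s, 0 ≤ f y) : ∑ x ∈ s, f x ≤ ∑ x ∈ t, f x := by
  have hexchange : ∑ x ∈ s \ t, f x ≤ ∑ x ∈ t \ s, f x :=
    sum_le_sum_of_card_le_of_forall_le (card_sdiff_le_card_sdiff_iff.2 hcard) hle hnonneg
  calc ∑ x ∈ s, f x = ∑ x ∈ s ∩ t, f x + ∑ x ∈ s \ t, f x := (sum_inter_add_sum_sdiff s t f).symm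
    _ ≤ ∑ x ∈ s ∩ t, f x + ∑ x ∈ t \ s, f x := by gcongr
    _ = ∑ x ∈ t ∩ s, f x + ∑ x ∈ t \ s, f x := by rw [inter_comm]
    _ = ∑ x ∈ t, f x := sum_inter_add_sum_sdiff t s f

end Exchange

section Servers

variable {J : Type*}

/-- The servers used by the allocation `a` on the jobs in `s`: the pair `⟨j, i⟩` stands for the
`(i + 1)`-st server of job `j`, whose marginal throughput is `p j i`. -/
def allocatedServers (s : Finset J) (a : J → ℕ) : Finset (Σ _ : J, ℕ) :=
  s.sigma fun j ↦ range (a j)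

theorem card_allocatedServers (s : Finset J) (a : J → ℕ) :
    #(allocatedServers s a) = ∑ j ∈ s, a j := by
  simp [allocatedServers]

theorem sum_allocatedServers {N : Type*} [AddCommMonoid N] (s : Finset J) (a : J → ℕ)
    (p : J → ℕ → N) :
    ∑ x ∈ allocatedServers s a, p x.1 x.2 = ∑ j ∈ s, ∑ i ∈ range (a j), p j i :=
  sum_sigma _ _ _

theorem mem_allocatedServers_sdiff [DecidableEq J] {s : Finset J} {a b : J → ℕ}
    {x : Σ _ : J, ℕ} :
    x ∈ allocatedServers s a \ allocatedServers s b ↔ x.1 ∈ s ∧ x.2 < a x.1 ∧ b x.1 ≤ x.2 := by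
  simp only [allocatedServers, mem_sdiff, mem_sigma, mem_range]
  grind

end Servers

theorem threshold_allocation_optimal_general {J N : Type*} [AddCommMonoid N] [Preorder N]
    [IsOrderedAddMonoid N] {s : Finset J} {p : J → ℕ → N} {a b : J → ℕ}
    (hanti : ∀ j ∈ s, Antitone (p j)) (hpos : ∀ j ∈ s, ∀ i < a j, 0 ≤ p j i)
    (hthresh : ∀ j ∈ s, ∀ j' ∈ s, 1 ≤ a j → p j' (a j') ≤ p j (a j - 1))
    (hcap : ∑ j ∈ s, b j ≤ ∑ j ∈ s, a j) :
    ∑ j ∈ s, ∑ i ∈ range (b j), p j i ≤ ∑ j ∈ s, ∑ i ∈ range (a j), p j i := by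
  classical
  rw [← sum_allocatedServers, ← sum_allocatedServers]
  rw [← card_allocatedServers, ← card_allocatedServers] at hcap
  refine sum_le_sum_of_card_le_of_forall_sdiff_le hcap ?exchange ?nonneg
  case exchange =>
    rintro ⟨j', i'⟩ hgained ⟨j, i⟩ hlost
    obtain ⟨hj', -, hi'⟩ := mem_allocatedServers_sdiff.1 hgained
    obtain ⟨hj, hi, -⟩ := mem_allocatedServers_sdiff.1 hlost
    calc p j' i' ≤ p j' (a j') := hanti j' hj' hi'
      _ ≤ p j (a j - 1) := hthresh j hj j' hj' (Nat.one_le_of_lt hi)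
      _ ≤ p j i := hanti j hj (Nat.le_sub_one_of_lt hi)
  case nonneg =>
    rintro ⟨j, i⟩ hlost
    obtain ⟨hj, hi, -⟩ := mem_allocatedServers_sdiff.1 hlost
    exact hpos j hj i hi

/-- Optimality of threshold allocations under a capacity constraint in a
single slot: a full allocation with the threshold property maximizes total
cumulative throughput among all allocations within capacity. -/
theorem threshold_allocation_optimal {J : Type*} [Fintype J]
    (p : J → ℕ → ℝ) (hanti : ∀ j, Antitone (p j)) (hpos : ∀ j i, 0 ≤ p j i)
    (M : ℕ) (a : J → ℕ) (ha : ∑ j, a j = M)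
    (hthresh : ∀ j j', 1 ≤ a j → p j' (a j') ≤ p j (a j - 1)) :
    ∀ b : J → ℕ, (∑ j, b j) ≤ M →
      (∑ j, ∑ i ∈ Finset.range (b j), p j i) ≤
        ∑ j, ∑ i ∈ Finset.range (a j), p j i :=
  fun _ hb ↦ threshold_allocation_optimal_general (fun j _ ↦ hanti j) (fun j _ i _ ↦ hpos j i)
    (fun j _ j' _ ↦ hthresh j j') (hb.trans_eq ha.symm)
end

section
/- No job is starved by an optimal allocation: let J be a finite set of jobs, each with an antitone nonnegative marginal throughput profile p j : ℕ → ℝ satisfying the normalization p j 0 = 1 and p j i < 1 for all i ≥ 1, and define T j n = ∑ i ∈ Finset.range n, p j i. Let M be a natural number with M ≥ |J|. Then every allocation a : J → ℕ with ∑ j, a j = M that maximizes ∑ j, T j (a j) over all allocations summing to M satisfies a j ≥ 1 for every job j. -/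
/-!
Moving one server from job `k` to job `j` trades the last marginal throughput of `k` for the next
one of `j`, so at an optimum the latter is at most the former. If some job `j` were below its
minimum allocation `m j` (the paper's `k_min`, here `1`), then, the minima fitting within the
capacity, some job `k` would be above `m k`, and moving a server from `k` to `j` would be a strict
gain.
-/

theorem exists_lt_of_sum_le_sum_of_exists_lt {ι R : Type*} [AddCommMonoid R] [LinearOrder R]
    [IsOrderedCancelAddMonoid R] {s : Finset ι} {f g : ι → R}
    (hle : ∑ i ∈ s, f i ≤ ∑ i ∈ s, g i) (hlt : ∃ i ∈ s, g i < f i) : ∃ i ∈ s, f i < g i := by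
  by_contra! hgf
  exact hle.not_gt (Finset.sum_lt_sum hgf hlt)

section Throughput

variable {J R : Type*} [Fintype J] [AddCommMonoid R]

/-- The objective `∑ j, T j (a j)` of the allocation `a`: the total throughput when job `j` runs on
`a j` servers and its `(i + 1)`-st server contributes `p j i`. -/
def totalThroughput (p : J → ℕ → R) (a : J → ℕ) : R :=
  ∑ j, ∑ i ∈ Finset.range (a j), p j i

theorem totalThroughput_add_single [DecidableEq J] (p : J → ℕ → R) (a : J → ℕ) (j : J) :
    totalThroughput p (a + Pi.single j 1) = totalThroughput p a + p j (a j) := by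
  have cumulative (k : J) : ∑ i ∈ Finset.range ((a + Pi.single j 1 : J → ℕ) k), p k i =
      ∑ i ∈ Finset.range (a k), p k i + if k = j then p k (a k) else 0 := by
    obtain rfl | hkj := eq_or_ne k j
    · simp [Finset.sum_range_succ]
    · simp [hkj]
  simp only [totalThroughput, cumulative, Finset.sum_add_distrib]
  simp

variable [Preorder R] [AddLeftReflectLE R]

theorem marginal_le_marginal_of_isMaxOn_totalThroughput {p : J → ℕ → R} {a : J → ℕ}
    (hopt : IsMaxOn (totalThroughput p) {b | ∑ i, b i = ∑ i, a i} a)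
    {j k : J} (hjk : j ≠ k) (hk : 1 ≤ a k) : p j (a j) ≤ p k (a k - 1) := by
  classical
  have single_le : Pi.single k 1 ≤ a := by simpa [Pi.single, update_le_iff] using hk
  obtain ⟨c, rfl⟩ : ∃ c, a = c + Pi.single k 1 := le_iff_exists_add'.mp single_le
  have exchange : totalThroughput p (c + Pi.single j 1) ≤ totalThroughput p (c + Pi.single k 1) :=
    hopt (by simp [Finset.sum_add_distrib])
  simp only [totalThroughput_add_single] at exchange
  simpa [hjk] using le_of_add_le_add_left exchange

theorem optimal_allocation_no_starvation_general {p : J → ℕ → R} {m a : J → ℕ}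
    (hlt : ∀ j k i l, i < m j → m k ≤ l → p k l < p j i) (hm : ∑ j, m j ≤ ∑ j, a j)
    (hopt : IsMaxOn (totalThroughput p) {b | ∑ j, b j = ∑ j, a j} a) (j : J) : m j ≤ a j := by
  by_contra! hj
  obtain ⟨k, -, hk⟩ := exists_lt_of_sum_le_sum_of_exists_lt hm ⟨j, Finset.mem_univ j, hj⟩
  have hjk : j ≠ k := by
    rintro rfl
    exact hj.asymm hk
  have marginal_le : p j (a j) ≤ p k (a k - 1) :=
    marginal_le_marginal_of_isMaxOn_totalThroughput hopt hjk (Nat.one_le_of_lt hk)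
  exact marginal_le.not_gt (hlt j k _ _ hj (Nat.le_sub_one_of_lt hk))

end Throughput

/-- No job is starved by an optimal allocation: if profiles are normalized so
that the first server contributes throughput `1` and later servers strictly
less, and capacity covers all jobs, then any throughput-maximizing allocation
gives every job at least one server. -/
theorem optimal_allocation_no_starvation {J : Type*} [Fintype J]
    (p : J → ℕ → ℝ) (hanti : ∀ j, Antitone (p j)) (hpos : ∀ j i, 0 ≤ p j i)
    (hnorm : ∀ j, p j 0 = 1) (hlt : ∀ j i, 1 ≤ i → p j i < 1)
    (M : ℕ) (hM : Fintype.card J ≤ M)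
    (a : J → ℕ) (ha : ∑ j, a j = M)
    (hopt : ∀ b : J → ℕ, (∑ j, b j = M) →
      (∑ j, ∑ i ∈ Finset.range (b j), p j i) ≤
        ∑ j, ∑ i ∈ Finset.range (a j), p j i) :
    ∀ j, 1 ≤ a j := by
  subst ha
  exact optimal_allocation_no_starvation_general (p := p) (m := 1)
    (fun j k i l hi hl => by simpa [Nat.lt_one_iff.mp hi, hnorm] using hlt k l hl)
    (by simpa using hM) (isMaxOn_iff.mpr hopt)
end
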